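/- Assume m < 0 and let k ≥ 1 be an integer. Then p_z(X) ≠ 0 for every z ∈ ℍ, and for every z ∈ ℍ with Q_X(z) ≠ 0 one has 0 < w(z) < 1, where w(z) := 2|m|/p_z(X)². Moreover, defining F(z) := w(z)^{k/2} · ₂F₁( k/2, (k+1)/2; k + 1/2; w(z) ) on the open set {z ∈ ℍ : Q_X(z) ≠ 0}, the k-fold iterated raising operator satisfies (R_0^k F)(z) = (Γ(2k)/Γ(k)) · ( √(4N|m|) · sgn(p_z(X)) / Q_X(z) )^k for all z in this set. -/

import Mathlib

open Complex ComplexConjugate Metric Set MeasureTheory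

noncomputable section

/-- The upper half-plane, as a subset of `ℂ`. -/
def UH : Set ℂ := {z | 0 < z.im}

/-- The Wirtinger derivative `∂f/∂z = (1/2)(∂f/∂x − i·∂f/∂y)`. -/
def dz (f : ℂ → ℂ) (z : ℂ) : ℂ :=
  (1 / 2 : ℂ) * (fderiv ℝ f z 1 - Complex.I * fderiv ℝ f z Complex.I)

/-- The Maass raising operator `R_κ f = 2i·∂f/∂z + (κ/y)·f`. -/
def raise (κ : ℝ) (f : ℂ → ℂ) : ℂ → ℂ :=
  fun z => 2 * Complex.I * dz f z + ((κ / z.im : ℝ) : ℂ) * f z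

/-- The iterated raising operator `R_κⁿ = R_{κ+2n−2} ∘ ⋯ ∘ R_{κ+2} ∘ R_κ`. -/
def raiseIter (κ : ℝ) : ℕ → (ℂ → ℂ) → (ℂ → ℂ)
  | 0 => fun f => f
  | n + 1 => fun f => raise (κ + 2 * n) (raiseIter κ n f)

/-- `m = (b² − 4Nac)/(4N)`, the value `q(X)` of the quadratic form at
`X = ((b/2N, c/N), (−a, −b/2N))`. -/
def mVal (N : ℕ) (a b c : ℝ) : ℝ := (b ^ 2 - 4 * N * a * c) / (4 * N)

/-- The quadratic polynomial `Q_X(z) = aNz² + bz + c`. -/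
def Qx (N : ℕ) (a b c : ℝ) (z : ℂ) : ℂ := (a : ℂ) * (N : ℂ) * z ^ 2 + (b : ℂ) * z + (c : ℂ)

/-- The quantity `p_z(X) = (aN|z|² + bx + c)/(√(2N)·y)`. -/
def pX (N : ℕ) (a b c : ℝ) (z : ℂ) : ℝ :=
  (a * N * Complex.normSq z + b * z.re + c) / (Real.sqrt (2 * N) * z.im)

/-- The argument `w(z) = 2|m|/p_z(X)²` of the hypergeometric series. -/
def wF (N : ℕ) (a b c : ℝ) (z : ℂ) : ℝ := 2 * |mVal N a b c| / (pX N a b c z) ^ 2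

/-- The Gauss hypergeometric series `₂F₁(α, β; γ; w) = ∑ (α)ₙ(β)ₙ/((γ)ₙ n!) wⁿ`,
with `(α)ₙ` the ascending Pochhammer symbol. -/
def gaussF (α β γ w : ℝ) : ℝ :=
  ∑' n : ℕ, (Polynomial.eval α (ascPochhammer ℝ n) * Polynomial.eval β (ascPochhammer ℝ n) /
    (Polynomial.eval γ (ascPochhammer ℝ n) * (n.factorial : ℝ))) * w ^ n

def cK (k n : ℕ) : ℝ :=
  (Polynomial.eval ((k : ℝ) / 2) (ascPochhammer ℝ n) *
    Polynomial.eval (((k : ℝ) + 1) / 2) (ascPochhammer ℝ n) /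
    (Polynomial.eval ((k : ℝ) + 1 / 2) (ascPochhammer ℝ n) * (n.factorial : ℝ)))

def dK (k j n : ℕ) : ℝ := (-1) ^ j * cK k n * ((k + 2 * n).ascFactorial j : ℝ)

def GK (k j : ℕ) (t : ℝ) : ℝ := ∑' n : ℕ, dK k j n * (t⁻¹) ^ (k + 2 * n + j)

lemma cK_succ (k n : ℕ) : cK k (n + 1) =
    cK k n * (((k : ℝ) / 2 + n) * (((k : ℝ) + 1) / 2 + n) / (((k : ℝ) + 1 / 2 + n) * (n + 1))) := by
  have h : Polynomial.eval ((k : ℝ) + 1 / 2) (ascPochhammer ℝ n) ≠ 0 :=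
    (ascPochhammer_pos n _ (by positivity)).ne'
  have h2 : ((k : ℝ) + 1 / 2 + n) ≠ 0 := by positivity
  have h3 : (n.factorial : ℝ) ≠ 0 := by positivity
  unfold cK
  simp only [ascPochhammer_succ_eval, Nat.factorial_succ]
  push_cast
  field_simp

lemma asc_rel (k n : ℕ) : ((k + 2 * (n + 1)).ascFactorial k : ℝ) * ((k + 2 * n) * (k + 2 * n + 1)) =
    ((k + 2 * n).ascFactorial k : ℝ) * ((2 * k + 2 * n) * (2 * k + 2 * n + 1)) := by
  have h1 := Nat.succ_ascFactorial (k + 2 * n) k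
  have h2 := Nat.succ_ascFactorial (k + 2 * n + 1) k
  have e : k + 2 * (n + 1) = (k + 2 * n + 1).succ := by omega
  rw [e]
  have h1' := congrArg (Nat.cast : ℕ → ℝ) h1
  have h2' := congrArg (Nat.cast : ℕ → ℝ) h2
  rw [Nat.succ_eq_add_one] at *
  push_cast at h1' h2'
  linear_combination (k + 2 * n : ℝ) * h2' + (2 * k + 2 * n + 1 : ℝ) * h1'

lemma cK_closed (K n : ℕ) : cK (K + 1) n * ((K + 1 + 2 * n).ascFactorial (K + 1) : ℝ) =
    ((2 * K + 1).factorial : ℝ) / K.factorial * ((n + K).choose K : ℝ) := by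
  induction n with
  | zero =>
    have := congrArg (Nat.cast : ℕ → ℝ) (Nat.factorial_mul_ascFactorial K (K + 1))
    push_cast at this
    simp [cK]
    rw [show 2 * K + 1 = K + (K + 1) by ring, ← this]
    field_simp
  | succ n ih =>
    have h1 := asc_rel (K + 1) n
    have h2 : ((n + 1 + K).choose K : ℝ) * (n + 1) = ((n + K).choose K : ℝ) * (n + K + 1) := by
      have := Nat.choose_mul_succ_eq (n + K) K
      have e : n + K + 1 - K = n + 1 := by omega
      rw [e] at this
      rw [show n + 1 + K = n + K + 1 by ring]
      exact_mod_cast this.symm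
    rw [cK_succ]
    push_cast at h1 ⊢
    have p1 : ((K : ℝ) + 1 + 1 / 2 + n) ≠ 0 := by positivity
    have p2 : ((n : ℝ) + 1) ≠ 0 := by positivity
    have p3 : (((K : ℝ) + 1 + 2 * n) * ((K : ℝ) + 1 + 2 * n + 1)) ≠ 0 := by positivity
    have h2' : ((n + 1 + K).choose K : ℝ) = ((n + K).choose K : ℝ) * (n + K + 1) / (n + 1) := by
      rw [← h2]; field_simp
    have h1' := eq_div_of_mul_eq p3 h1
    rw [h2', h1', ← mul_div_assoc (((2 * K + 1).factorial : ℝ) / K.factorial),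
      ← mul_assoc (((2 * K + 1).factorial : ℝ) / K.factorial), ← ih]
    have p4 : ((K : ℝ) + 1 + 2 * n) ≠ 0 := by positivity
    have p5 : ((K : ℝ) + 1 + 2 * n + 1) ≠ 0 := by positivity
    have p6 : (2 * ((K : ℝ) + 1) + 1 + 2 * n) ≠ 0 := by positivity
    field_simp
    ring

lemma cK_nonneg (k n : ℕ) : 0 ≤ cK k n := by
  unfold cK
  have h1 : 0 ≤ Polynomial.eval ((k : ℝ) / 2) (ascPochhammer ℝ n) := by
    rcases Nat.eq_zero_or_pos k with rfl | hk
    · rcases n with _ | n <;> simp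
    · exact (ascPochhammer_pos n _ (by positivity)).le
  have h2 := (ascPochhammer_pos n (((k : ℝ) + 1) / 2) (by positivity)).le
  have h3 := (ascPochhammer_pos n (((k : ℝ) + 1 / 2)) (by positivity)).le
  positivity

lemma cK_bigO (K : ℕ) : (fun n => cK (K + 1) n) =O[Filter.atTop] fun n => (((n ^ K : ℕ)) : ℝ) := by
  apply Asymptotics.isBigO_iff.2
    ⟨((2 * K + 1).factorial : ℝ) / K.factorial * 2 ^ K, ?_⟩
  filter_upwards [Filter.Ioi_mem_atTop K] with n hn
  have hn : K < n := hn
  rw [Real.norm_of_nonneg (cK_nonneg _ _), Real.norm_of_nonneg (by positivity)]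
  have h1 : (1 : ℝ) ≤ ((K + 1 + 2 * n).ascFactorial (K + 1) : ℝ) := by
    have h := Nat.ascFactorial_pos (K + 2 * n) (K + 1)
    rw [show K + 2 * n + 1 = K + 1 + 2 * n by ring] at h
    exact_mod_cast h
  have h2 : ((n + K).choose K : ℝ) ≤ 2 ^ K * (n ^ K : ℕ) := by
    have : (n + K).choose K ≤ (2 * n) ^ K :=
      (Nat.choose_le_choose K (by lia)).trans (Nat.choose_le_pow _ _)
    rw [mul_pow] at this
    exact_mod_cast this
  calc cK (K + 1) n ≤ cK (K + 1) n * ((K + 1 + 2 * n).ascFactorial (K + 1) : ℝ) :=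
        le_mul_of_one_le_right (cK_nonneg _ _) h1
    _ = _ := cK_closed K n
    _ ≤ _ := by rw [mul_assoc]; gcongr

lemma dK_succ (k j n : ℕ) : dK k (j + 1) n = -((k + 2 * n + j : ℕ) : ℝ) * dK k j n := by
  unfold dK
  rw [Nat.ascFactorial_succ]
  push_cast
  ring

lemma dK_bigO (K j : ℕ) :
    (fun n => dK (K + 1) j n) =O[Filter.atTop] fun n => (((n ^ (K + j) : ℕ)) : ℝ) := by
  induction j with
  | zero => simpa [dK] using cK_bigO K
  | succ j ih =>
    have h : (fun n : ℕ => -((K + 1 + 2 * n + j : ℕ) : ℝ)) =O[Filter.atTop]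
        fun n => ((n : ℕ) : ℝ) := by
      apply Asymptotics.isBigO_iff.2 ⟨(K + 1 + 2 + j : ℝ), ?_⟩
      filter_upwards [Filter.Ioi_mem_atTop 0] with n hn
      have hn : 1 ≤ (n : ℝ) := by exact_mod_cast hn
      rw [norm_neg, Real.norm_of_nonneg (by positivity), Real.norm_of_nonneg (by positivity)]
      push_cast
      nlinarith [mul_nonneg (Nat.cast_nonneg (α := ℝ) K) (sub_nonneg.2 hn),
        mul_nonneg (Nat.cast_nonneg (α := ℝ) j) (sub_nonneg.2 hn)]
    have := h.mul ih
    simp only [dK_succ]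
    refine this.congr_right fun n => ?_
    push_cast
    ring

lemma dK_summable (K j : ℕ) (e : ℕ) {r : ℝ} (h0 : 0 ≤ r) (h1 : r < 1) :
    Summable fun n => |dK (K + 1) j n| * r ^ (K + 1 + 2 * n + e) := by
  have : ‖r ^ 2‖ < 1 := by
    rw [Real.norm_of_nonneg (by positivity)]
    exact pow_lt_one₀ h0 h1 (by norm_num)
  have h2 := summable_pow_mul_geometric_of_norm_lt_one (K + j) this
  have h3 := (dK_bigO K j).mul (Asymptotics.isBigO_refl (fun n : ℕ => (r ^ 2) ^ n) Filter.atTop)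
  have h4 := summable_of_isBigO_nat (by simpa using h2) h3.norm_left
  refine (h4.mul_left (r ^ (K + 1 + e))).congr fun n => ?_
  rw [norm_mul, Real.norm_eq_abs, Real.norm_of_nonneg (by positivity)]
  ring

lemma hasDerivAt_inv_pow (e : ℕ) {t : ℝ} (ht : t ≠ 0) :
    HasDerivAt (fun t : ℝ => (t⁻¹) ^ e) (-(e : ℝ) * (t⁻¹) ^ (e + 1)) t := by
  refine HasDerivAt.congr_deriv ((hasDerivAt_inv ht).pow e) ?_
  rcases e with _ | e
  · simp
  · simp; ring

lemma GK_deriv (K j : ℕ) {t : ℝ} (ht : 1 < t) :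
    HasDerivAt (GK (K + 1) j) (GK (K + 1) (j + 1) t) t := by
  obtain ⟨ρ, h1, h2⟩ := exists_between ht
  have hρ : 0 < ρ := by linarith
  have hr0 : 0 ≤ ρ⁻¹ := by positivity
  have hr1 : ρ⁻¹ < 1 := inv_lt_one_of_one_lt₀ h1
  unfold GK
  refine hasDerivAt_tsum_of_isPreconnected (t := Set.Ioi ρ) (y₀ := t)
    (u := fun n => |dK (K + 1) (j + 1) n| * (ρ⁻¹) ^ (K + 1 + 2 * n + (j + 1)))
    (g := fun n t => dK (K + 1) j n * (t⁻¹) ^ (K + 1 + 2 * n + j))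
    (g' := fun n t => dK (K + 1) (j + 1) n * (t⁻¹) ^ (K + 1 + 2 * n + (j + 1)))
    (dK_summable K (j + 1) (j + 1) hr0 hr1) isOpen_Ioi isPreconnected_Ioi ?_ ?_ h2 ?_ h2
  · intro n y hy
    have hy0 : y ≠ 0 := (hρ.trans hy).ne'
    refine HasDerivAt.congr_deriv
      ((hasDerivAt_inv_pow (K + 1 + 2 * n + j) hy0).const_mul (dK (K + 1) j n)) ?_
    rw [dK_succ]
    ring
  · intro n y hy
    have hy' : ρ < y := hy
    have hy0 : 0 < y := hρ.trans hy
    rw [norm_mul, Real.norm_eq_abs, Real.norm_of_nonneg (by positivity)]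
    gcongr
  · apply Summable.of_norm
    have ht0 : 0 < t := by linarith
    convert dK_summable K j j (r := t⁻¹) (by positivity) (inv_lt_one_of_one_lt₀ ht) using 2 with n
    rw [norm_mul, Real.norm_eq_abs, Real.norm_of_nonneg (by positivity)]

lemma GK_final (K : ℕ) {t : ℝ} (ht : 1 < t) :
    GK (K + 1) (K + 1) t = (-1) ^ (K + 1) * (((2 * K + 1).factorial : ℝ) / K.factorial) /
      (t ^ 2 - 1) ^ (K + 1) := by
  have ht0 : 0 < t := by linarith
  have hr : ‖(t⁻¹) ^ 2‖ < 1 := by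
    rw [Real.norm_of_nonneg (by positivity)]
    exact pow_lt_one₀ (by positivity) (inv_lt_one_of_one_lt₀ ht) (by norm_num)
  have h := tsum_choose_mul_geometric_of_norm_lt_one K hr
  unfold GK
  have e : ∀ n, dK (K + 1) (K + 1) n * (t⁻¹) ^ (K + 1 + 2 * n + (K + 1)) =
      ((-1) ^ (K + 1) * (((2 * K + 1).factorial : ℝ) / K.factorial) * (t⁻¹) ^ (2 * (K + 1))) *
        (((n + K).choose K : ℝ) * ((t⁻¹) ^ 2) ^ n) := by
    intro n
    unfold dK
    rw [mul_assoc ((-1) ^ (K + 1)), cK_closed]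
    ring
  simp_rw [e]
  have : t ^ 2 - 1 ≠ 0 := by nlinarith
  have h3 : 1 - t⁻¹ ^ 2 = (t ^ 2 - 1) / t ^ 2 := by field_simp
  rw [tsum_mul_left, h, h3, div_pow, pow_mul]
  have h4 : ((K.factorial : ℕ) : ℝ) ≠ 0 := by positivity
  simp only [inv_pow]
  field_simp

def HasDz (f : ℂ → ℂ) (f' z : ℂ) : Prop :=
  ∃ L : ℂ →L[ℝ] ℂ, HasFDerivAt f L z ∧ (1 / 2 : ℂ) * (L 1 - Complex.I * L Complex.I) = f'

lemma HasDz.dz_eq {f : ℂ → ℂ} {f' z : ℂ} (h : HasDz f f' z) : dz f z = f' := by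
  obtain ⟨L, h1, h2⟩ := h
  rw [dz, h1.fderiv, h2]

lemma HasDz.congr_d {f : ℂ → ℂ} {f' g' z : ℂ} (h : HasDz f f' z) (e : f' = g') : HasDz f g' z :=
  e ▸ h

lemma HasDz.congr_f {f g : ℂ → ℂ} {f' z : ℂ} (h : HasDz f f' z) (e : g =ᶠ[nhds z] f) :
    HasDz g f' z := by
  obtain ⟨L, h1, h2⟩ := h
  exact ⟨L, h1.congr_of_eventuallyEq e, h2⟩

lemma HasDz.const (a z : ℂ) : HasDz (fun _ => a) 0 z := ⟨0, hasFDerivAt_const a z, by simp⟩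

lemma HasDz.id (z : ℂ) : HasDz (fun z => z) 1 z :=
  ⟨ContinuousLinearMap.id ℝ ℂ, hasFDerivAt_id z, by simp; norm_num⟩

lemma HasDz.conj (z : ℂ) : HasDz (fun z => (starRingEnd ℂ) z) 0 z :=
  ⟨Complex.conjCLE.toContinuousLinearMap, Complex.conjCLE.toContinuousLinearMap.hasFDerivAt,
    by simp⟩

lemma HasDz.im (z : ℂ) : HasDz (fun z => ((z.im : ℝ) : ℂ)) (-Complex.I / 2) z :=
  ⟨Complex.ofRealCLM.comp Complex.imCLM, (Complex.ofRealCLM.comp Complex.imCLM).hasFDerivAt,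
    by simp; ring⟩

lemma HasDz.add {f g : ℂ → ℂ} {f' g' z : ℂ} (hf : HasDz f f' z) (hg : HasDz g g' z) :
    HasDz (fun z => f z + g z) (f' + g') z := by
  obtain ⟨L, h1, h2⟩ := hf
  obtain ⟨M, h3, h4⟩ := hg
  refine ⟨L + M, h1.add h3, ?_⟩
  rw [← h2, ← h4]
  simp
  ring

lemma HasDz.mul {f g : ℂ → ℂ} {f' g' z : ℂ} (hf : HasDz f f' z) (hg : HasDz g g' z) :
    HasDz (fun z => f z * g z) (f' * g z + f z * g') z := by
  obtain ⟨L, h1, h2⟩ := hf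
  obtain ⟨M, h3, h4⟩ := hg
  refine ⟨_, h1.mul h3, ?_⟩
  rw [← h2, ← h4]
  simp
  ring

lemma HasDz.comp_real {T : ℂ → ℝ} {t z : ℂ} {g : ℝ → ℝ} {g' : ℝ}
    (hT : HasDz (fun z => ((T z : ℝ) : ℂ)) t z) (hg : HasDerivAt g g' (T z)) :
    HasDz (fun z => ((g (T z) : ℝ) : ℂ)) ((g' : ℂ) * t) z := by
  obtain ⟨L, h1, h2⟩ := hT
  have hr : HasFDerivAt T (Complex.reCLM.comp L) z := by
    have := Complex.reCLM.hasFDerivAt.comp z h1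
    exact this
  have h3 : HasFDerivAt (fun z => ((T z : ℝ) : ℂ)) (Complex.ofRealCLM.comp (Complex.reCLM.comp L)) z :=
    Complex.ofRealCLM.hasFDerivAt.comp z hr
  have hL := h1.unique h3
  have h4 : HasFDerivAt (fun z => g (T z)) (g' • Complex.reCLM.comp L) z :=
    hg.comp_hasFDerivAt z hr
  refine ⟨Complex.ofRealCLM.comp (g' • Complex.reCLM.comp L),
    Complex.ofRealCLM.hasFDerivAt.comp z h4, ?_⟩
  rw [← h2]
  have e : ∀ v, L v = (((L v).re : ℝ) : ℂ) := fun v => by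
    conv_lhs => rw [hL]
    simp
  rw [e 1, e Complex.I]
  simp
  ring

lemma HasDz.imInv {z : ℂ} (hz : z.im ≠ 0) :
    HasDz (fun z => ((z.im⁻¹ : ℝ) : ℂ)) (Complex.I / 2 * ((z.im⁻¹ : ℝ) : ℂ) ^ 2) z := by
  refine (HasDz.comp_real (T := fun z => z.im) (HasDz.im z) (hasDerivAt_inv hz)).congr_d ?_
  push_cast
  ring

def TT (r A b c : ℝ) (z : ℂ) : ℝ := r * (A * Complex.normSq z + b * z.re + c) * z.im⁻¹

def BB (r A b c : ℝ) (z : ℂ) : ℂ :=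
  -(r : ℂ) * ((A : ℂ) * ((starRingEnd ℂ) z * (starRingEnd ℂ) z) + b * (starRingEnd ℂ) z + c) *
    (((z.im⁻¹ : ℝ) : ℂ) * ((z.im⁻¹ : ℝ) : ℂ))

lemma conj_eq (z : ℂ) : (starRingEnd ℂ) z = z - 2 * Complex.I * z.im := by
  apply Complex.ext <;> simp; ring

lemma TT_eq (r A b c : ℝ) (z : ℂ) : ((TT r A b c z : ℝ) : ℂ) =
    (r : ℂ) * ((A : ℂ) * (z * (starRingEnd ℂ) z) + (b / 2 : ℂ) * (z + (starRingEnd ℂ) z) + c) *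
      ((z.im⁻¹ : ℝ) : ℂ) := by
  unfold TT
  rw [Complex.mul_conj, Complex.add_conj]
  push_cast
  ring

lemma TT_dz (r A b c : ℝ) {z : ℂ} (hz : z.im ≠ 0) :
    HasDz (fun z => ((TT r A b c z : ℝ) : ℂ)) (-Complex.I / 2 * BB r A b c z) z := by
  simp_rw [TT_eq]
  refine (((HasDz.const (r : ℂ) z).mul ((((HasDz.const (A : ℂ) z).mul ((HasDz.id z).mul
    (HasDz.conj z))).add ((HasDz.const (b / 2 : ℂ) z).mul
      ((HasDz.id z).add (HasDz.conj z)))).add (HasDz.const (c : ℂ) z))).mul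
        (HasDz.imInv hz)).congr_d ?_
  have hz' : (z.im : ℂ) ≠ 0 := by exact_mod_cast hz
  unfold BB
  rw [conj_eq]
  push_cast
  field_simp
  ring_nf
  simp only [Complex.I_sq, show Complex.I ^ 3 = -Complex.I by rw [pow_succ, Complex.I_sq]; ring]
  ring

lemma BB_dz (r A b c : ℝ) {z : ℂ} (hz : z.im ≠ 0) :
    HasDz (BB r A b c) (Complex.I * ((z.im⁻¹ : ℝ) : ℂ) * BB r A b c z) z := by
  refine (((HasDz.const (-(r : ℂ)) z).mul ((((HasDz.const (A : ℂ) z).mul ((HasDz.conj z).mul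
    (HasDz.conj z))).add ((HasDz.const (b : ℂ) z).mul
      (HasDz.conj z))).add (HasDz.const (c : ℂ) z))).mul
        ((HasDz.imInv hz).mul (HasDz.imInv hz))).congr_d ?_
  unfold BB
  ring

lemma BB_pow_dz (r A b c : ℝ) {z : ℂ} (hz : z.im ≠ 0) (j : ℕ) :
    HasDz (fun z => BB r A b c z ^ j)
      (j * (Complex.I * ((z.im⁻¹ : ℝ) : ℂ)) * BB r A b c z ^ j) z := by
  induction j with
  | zero => simpa using HasDz.const 1 z
  | succ j ih =>
    simp_rw [pow_succ]
    refine (ih.mul (BB_dz r A b c hz)).congr_d ?_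
    push_cast
    ring

lemma raiseIter_formula (r A b c : ℝ) (G : ℕ → ℝ → ℝ)
    (hG : ∀ j t, 1 < t → HasDerivAt (G j) (G (j + 1) t) t) (F : ℂ → ℂ)
    (hF : ∀ z : ℂ, 0 < z.im → 1 < TT r A b c z → F z = ((G 0 (TT r A b c z) : ℝ) : ℂ)) (j : ℕ) :
    ∀ z : ℂ, 0 < z.im → 1 < TT r A b c z →
      raiseIter 0 j F z = BB r A b c z ^ j * ((G j (TT r A b c z) : ℝ) : ℂ) := by
  induction j with
  | zero => intro z h1 h2; simpa [raiseIter] using hF z h1 h2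
  | succ j ih =>
    intro z h1 h2
    have hz : z.im ≠ 0 := h1.ne'
    have hT := TT_dz r A b c hz
    have hcT : ContinuousAt (TT r A b c) z := by
      obtain ⟨L, hL, -⟩ := hT
      have := Complex.continuous_re.continuousAt.comp hL.continuousAt
      exact this
    have ev : raiseIter 0 j F =ᶠ[nhds z]
        fun z => BB r A b c z ^ j * ((G j (TT r A b c z) : ℝ) : ℂ) := by
      filter_upwards [Complex.continuous_im.continuousAt.eventually (lt_mem_nhds h1),
        hcT.eventually (lt_mem_nhds h2)] with y hy1 hy2 using ih y hy1 hy2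
    have hd := ((BB_pow_dz r A b c hz j).mul (hT.comp_real (hG j _ h2))).congr_f ev
    show raise (0 + 2 * j) (raiseIter 0 j F) z = _
    unfold raise
    rw [hd.dz_eq, ih z h1 h2]
    have hz' : (z.im : ℂ) ≠ 0 := by exact_mod_cast hz
    push_cast
    rw [pow_succ]
    field_simp
    ring_nf
    simp only [Complex.I_sq]
    ring

lemma GK_zero (k : ℕ) {t : ℝ} (ht : 0 < t) : GK k 0 t =
    ((t⁻¹) ^ 2) ^ ((k : ℝ) / 2) *
      gaussF ((k : ℝ) / 2) (((k : ℝ) + 1) / 2) ((k : ℝ) + 1 / 2) ((t⁻¹) ^ 2) := by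
  have h : ((t⁻¹) ^ 2) ^ ((k : ℝ) / 2) = (t⁻¹) ^ k := by
    rw [← Real.rpow_natCast (t⁻¹) 2, ← Real.rpow_mul (by positivity), ← Real.rpow_natCast (t⁻¹) k]
    congr 1
    push_cast
    ring
  rw [h, gaussF, ← tsum_mul_left, GK]
  refine tsum_congr fun n => ?_
  simp [dK, cK]
  ring

theorem raising_hypergeometric (N : ℕ) (hN : 1 ≤ N) (a b c : ℝ) (k : ℕ) (hk : 1 ≤ k)
    (hm : mVal N a b c < 0) :
    (∀ z ∈ UH, pX N a b c z ≠ 0) ∧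
    (∀ z ∈ UH, Qx N a b c z ≠ 0 → 0 < wF N a b c z ∧ wF N a b c z < 1) ∧
    (∀ z ∈ UH, Qx N a b c z ≠ 0 →
      raiseIter 0 k
        (fun w => ((wF N a b c w ^ ((k : ℝ) / 2) *
          gaussF ((k : ℝ) / 2) (((k : ℝ) + 1) / 2) ((k : ℝ) + 1 / 2) (wF N a b c w) : ℝ) : ℂ)) z =
      ((Real.Gamma (2 * k) / Real.Gamma k : ℝ) : ℂ) *
        (((Real.sqrt (4 * N * |mVal N a b c|) * Real.sign (pX N a b c z) : ℝ) : ℂ) /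
          Qx N a b c z) ^ k) := by
  have hNp : (0 : ℝ) < N := by exact_mod_cast hN
  set M : ℝ := |mVal N a b c| with hM
  have hMpos : 0 < M := abs_pos.2 hm.ne
  have hMeq : 4 * N * M = 4 * N * a * c - b ^ 2 := by
    rw [hM, abs_of_neg hm, mVal]
    field_simp
    ring
  set L : ℝ := Real.sqrt (4 * N * M) with hL
  have hLpos : 0 < L := Real.sqrt_pos.2 (by positivity)
  have hLsq : L ^ 2 = 4 * N * M := Real.sq_sqrt (by positivity)
  set R : ℝ := Real.sqrt (2 * N) with hR
  have hRpos : 0 < R := Real.sqrt_pos.2 (by positivity)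
  have hRsq : R ^ 2 = 2 * N := Real.sq_sqrt (by positivity)
  have ha : a ≠ 0 := by
    rintro rfl
    have : 0 < 4 * N * M := by positivity
    nlinarith [sq_nonneg b]
  obtain ⟨s, hs2, hsa⟩ : ∃ s : ℝ, s ^ 2 = 1 ∧ 0 < s * a := by
    rcases lt_or_gt_of_ne ha with h | h
    · exact ⟨-1, by norm_num, by linarith⟩
    · exact ⟨1, by norm_num, by linarith⟩
  -- positivity of the numerator
  have hnum : ∀ z : ℂ, 0 < z.im → 0 < s * (a * N * Complex.normSq z + b * z.re + c) := by
    intro z hz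
    have h1 : 4 * (s * a) * N * (s * (a * N * Complex.normSq z + b * z.re + c)) =
        (2 * a * N * z.re + b) ^ 2 + 4 * a ^ 2 * N ^ 2 * z.im ^ 2 + 4 * N * M := by
      rw [hMeq, Complex.normSq_apply]
      linear_combination (4 * a * N * (a * N * (z.re * z.re + z.im * z.im) + b * z.re + c)) * hs2
    have h2 : 0 < 4 * (s * a) * N * (s * (a * N * Complex.normSq z + b * z.re + c)) := by
      rw [h1]; positivity
    exact pos_of_mul_pos_right h2 (by positivity)
  have hsp : ∀ z : ℂ, 0 < z.im → 0 < s * pX N a b c z := by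
    intro z hz
    unfold pX
    rw [← mul_div_assoc]
    exact div_pos (hnum z hz) (mul_pos hRpos hz)
  have hp : ∀ z : ℂ, 0 < z.im → pX N a b c z ≠ 0 := by
    intro z hz h
    have := hsp z hz
    simp [h] at this
  have hT : ∀ z : ℂ, 0 < z.im → 0 < TT (s / L) (a * N) b c z := by
    intro z hz
    unfold TT
    rw [div_mul_eq_mul_div]
    have := hnum z hz
    positivity
  have hw : ∀ z : ℂ, 0 < z.im → wF N a b c z = ((TT (s / L) (a * N) b c z)⁻¹) ^ 2 := by
    intro z hz
    have hn := (hnum z hz).ne'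
    have hn' : a * N * Complex.normSq z + b * z.re + c ≠ 0 := right_ne_zero_of_mul hn
    have hs : s ≠ 0 := left_ne_zero_of_mul hn
    unfold wF pX TT
    rw [← hM, ← hR]
    generalize a * N * Complex.normSq z + b * z.re + c = u at hn'
    rw [inv_pow, mul_pow, mul_pow, div_pow, div_pow, mul_pow, hs2, hLsq, hRsq]
    field_simp
    norm_num
  have hQ : ∀ z : ℂ, 0 < z.im → Complex.normSq (Qx N a b c z) =
      L ^ 2 * z.im ^ 2 * ((TT (s / L) (a * N) b c z) ^ 2 - 1) := by
    intro z hz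
    have e : L ^ 2 * z.im ^ 2 * ((TT (s / L) (a * N) b c z) ^ 2 - 1) =
        (a * N * Complex.normSq z + b * z.re + c) ^ 2 - (4 * N * a * c - b ^ 2) * z.im ^ 2 := by
      rw [← hMeq, ← hLsq]
      unfold TT
      rw [mul_pow, mul_pow, div_pow, hs2]
      field_simp
    rw [e, Complex.normSq_apply, Complex.normSq_apply]
    simp [Qx, pow_two]
    ring
  have hT1 : ∀ z : ℂ, 0 < z.im → Qx N a b c z ≠ 0 → 1 < TT (s / L) (a * N) b c z := by
    intro z hz hq
    have h1 := Complex.normSq_pos.2 hq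
    rw [hQ z hz] at h1
    have h2 : 0 < (TT (s / L) (a * N) b c z) ^ 2 - 1 := pos_of_mul_pos_right h1 (by positivity)
    nlinarith [hT z hz]
  refine ⟨fun z hz => hp z hz, ?_, ?_⟩
  · intro z hz hq
    have h1 := hT1 z hz hq
    rw [hw z hz]
    have h0 := hT z hz
    exact ⟨by positivity, pow_lt_one₀ (by positivity) (inv_lt_one_of_one_lt₀ h1) (by norm_num)⟩
  · intro z hz hq
    have hz : 0 < z.im := hz
    obtain ⟨K, rfl⟩ : ∃ K, k = K + 1 := ⟨k - 1, by omega⟩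
    have h1 := hT1 z hz hq
    rw [raiseIter_formula (s / L) (a * N) b c (GK (K + 1)) (fun j t ht => GK_deriv K j ht) _
      (fun y hy _ => by rw [GK_zero _ (hT y hy), hw y hy]) (K + 1) z hz h1, GK_final K h1]
    have hg1 : Real.Gamma (2 * ((K + 1 : ℕ) : ℝ)) = ((2 * K + 1).factorial : ℝ) := by
      rw [← Real.Gamma_nat_eq_factorial]
      congr 1
      push_cast
      ring
    have hg2 : Real.Gamma (((K + 1 : ℕ) : ℝ)) = (K.factorial : ℝ) := by
      rw [← Real.Gamma_nat_eq_factorial]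
      push_cast
      rfl
    rw [hg1, hg2]
    have hsgn : Real.sign (pX N a b c z) = s := by
      have h := hsp z hz
      rcases (show s = 1 ∨ s = -1 by simpa using hs2) with h' | h'
      · subst h'
        exact Real.sign_of_pos (by linarith)
      · subst h'
        exact Real.sign_of_neg (by linarith)
    rw [hsgn]
    have hbb : BB (s / L) (a * N) b c z =
        -(((s / L * (z.im ^ 2)⁻¹ : ℝ) : ℂ) * (starRingEnd ℂ) (Qx N a b c z)) := by
      unfold BB Qx
      simp
      ring
    have hqq : Qx N a b c z * (starRingEnd ℂ) (Qx N a b c z) =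
      (L : ℂ) ^ 2 * (z.im : ℂ) ^ 2 * (((TT (s / L) (a * N) b c z) ^ 2 - 1 : ℝ) : ℂ) := by
      rw [Complex.mul_conj, hQ z hz]
      push_cast
      rfl
    have hd : (((TT (s / L) (a * N) b c z) ^ 2 - 1 : ℝ) : ℂ) ≠ 0 := by
      have : (TT (s / L) (a * N) b c z) ^ 2 - 1 ≠ 0 := by nlinarith
      exact_mod_cast this
    have key : ((L * s : ℝ) : ℂ) / Qx N a b c z =
        -BB (s / L) (a * N) b c z / (((TT (s / L) (a * N) b c z) ^ 2 - 1 : ℝ) : ℂ) := by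
      have hL' : (L : ℂ) ≠ 0 := by exact_mod_cast hLpos.ne'
      have hz' : (z.im : ℂ) ≠ 0 := by exact_mod_cast hz.ne'
      rw [hbb, neg_neg, div_eq_div_iff hq hd, mul_assoc, mul_comm _ (Qx N a b c z), hqq]
      push_cast
      field_simp
    rw [key, div_pow, neg_pow]
    push_cast
    ring
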